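/- Define, for f ∈ L²(ℝ²;ℂ^d), the operator S̃f(x,y) = (Σ_{I∈𝒟} (M₂‖⟨f,h_I⟩₁‖_{ℂ^d})(y)² · 1_I(x)/|I|)^{1/2}, where ⟨f,h_I⟩₁(y) = ∫_ℝ f(x,y) h_I(x) dx and M₂ is the one-dimensional Hardy–Littlewood maximal operator acting in the variable y. Then there is an absolute constant C such that ‖S̃f‖_{L²(ℝ²)} ≤ C ‖f‖_{L²(ℝ²;ℂ^d)} for all f ∈ L²(ℝ²;ℂ^d). -/

import Mathlib

/-!
At the exponent `2` no vector-valued maximal inequality is needed, because the square of the `L²`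
norm of `S̃f` decouples over the dyadic intervals `I`. Integrating first in `x`, the factor
`1_I / |I|` contributes `1`, so `‖S̃f‖² = ∑_I ‖M₂ g_I‖²` with `g_I(y) = ‖⟨f, h_I⟩₁(y)‖`. The scalar
maximal theorem bounds this by `32 ∑_I ‖g_I‖²`, and Bessel's inequality for the orthonormal Haar
system, applied to the vector-valued function `f(·, y)` for almost every `y`, bounds
`∑_I ‖g_I‖²` by `‖f‖²`.

Only two structural facts enter: the measure in the variable `y` is doubling, which gives the
weak-type `(1,1)` inequality through Vitali's covering lemma and then the strong-type inequality
through the layer cake formula; and the functions `h_I` are orthonormal with weights of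
integral `1`.
-/

open MeasureTheory Filter Set Matrix ENNReal Topology ComplexOrder

noncomputable section

/-- The dyadic interval `[k·2^{-j}, (k+1)·2^{-j})`. -/
def dyadicI (j k : ℤ) : Set ℝ :=
  Set.Ico ((k : ℝ) * (2 : ℝ) ^ (-j)) (((k : ℝ) + 1) * (2 : ℝ) ^ (-j))

/-- The dyadic rectangle `I × J` indexed by `q = ((j,k),(j',k'))`. -/
def dyadicRect (q : (ℤ × ℤ) × (ℤ × ℤ)) : Set (ℝ × ℝ) :=
  (dyadicI q.1.1 q.1.2) ×ˢ (dyadicI q.2.1 q.2.2)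

/-- The Haar function `h_I = |I|^{-1/2} (1_{I₋} - 1_{I₊})` of the dyadic interval indexed
by `(j,k)`; its left and right halves are the dyadic intervals `(j+1, 2k)` and `(j+1, 2k+1)`. -/
def haar (j k : ℤ) (x : ℝ) : ℝ :=
  Real.sqrt ((2 : ℝ) ^ j) *
    ((dyadicI (j + 1) (2 * k)).indicator (fun _ => (1 : ℝ)) x -
      (dyadicI (j + 1) (2 * k + 1)).indicator (fun _ => (1 : ℝ)) x)

/-- The non-cancellative Haar function `h_I¹ = |I|^{-1/2} 1_I`. -/
def haarOne (j k : ℤ) (x : ℝ) : ℝ :=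
  Real.sqrt ((2 : ℝ) ^ j) * (dyadicI j k).indicator (fun _ => (1 : ℝ)) x

/-- The two-parameter Haar function `h_{I×J} = h_I ⊗ h_J`. -/
def haar2 (q : (ℤ × ℤ) × (ℤ × ℤ)) (p : ℝ × ℝ) : ℝ :=
  haar q.1.1 q.1.2 p.1 * haar q.2.1 q.2.2 p.2

/-- The dyadic parent of the dyadic interval indexed by `(j,k)`. -/
def dyadicParent (q : ℤ × ℤ) : ℤ × ℤ := (q.1 - 1, Int.ediv q.2 2)

/-- Matrix-valued Haar coefficient `B̂(R) = ∫ B h_R` (entrywise). -/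
def hatM (d : ℕ) (B : ℝ × ℝ → Matrix (Fin d) (Fin d) ℂ) (q : (ℤ × ℤ) × (ℤ × ℤ)) :
    Matrix (Fin d) (Fin d) ℂ :=
  Matrix.of fun i l => ∫ p : ℝ × ℝ, B p i l * (haar2 q p : ℂ)

/-- Vector-valued Haar coefficient `f̂(R) = ⟨f, h_R⟩ ∈ ℂ^d`. -/
def hatV (d : ℕ) (f : ℝ × ℝ → Fin d → ℂ) (q : (ℤ × ℤ) × (ℤ × ℤ)) (i : Fin d) : ℂ :=
  ∫ p : ℝ × ℝ, f p i * (haar2 q p : ℂ)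

/-- Scalar Haar coefficient `b̂(R) = ∫ b h_R`. -/
def hatS (b : ℝ × ℝ → ℂ) (q : (ℤ × ℤ) × (ℤ × ℤ)) : ℂ :=
  ∫ p : ℝ × ℝ, b p * (haar2 q p : ℂ)

/-- Mixed wavelet coefficient `⟨f, g₁ ⊗ g₂⟩ ∈ ℂ^d`. -/
def coefMix (d : ℕ) (f : ℝ × ℝ → Fin d → ℂ) (g₁ g₂ : ℝ → ℝ) (i : Fin d) : ℂ :=
  ∫ p : ℝ × ℝ, f p i * ((g₁ p.1 * g₂ p.2 : ℝ) : ℂ)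

/-- The positive-semidefinite (Loewner) order on `d × d` complex matrices. -/
def matLE {d : ℕ} (A B : Matrix (Fin d) (Fin d) ℂ) : Prop := (B - A).PosSemidef

/-- `B` satisfies the two dyadic product BMO inequalities with constant `C`:
for every open set `U ⊆ ℝ²` of finite nonzero measure,
`(1/|U|) Σ_{R ⊆ U} B̂(R)B̂(R)* ≤ C² I_d` and `(1/|U|) Σ_{R ⊆ U} B̂(R)*B̂(R) ≤ C² I_d`. -/
def BMOCond (d : ℕ) (B : ℝ × ℝ → Matrix (Fin d) (Fin d) ℂ) (C : ℝ) : Prop :=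
  ∀ U : Set (ℝ × ℝ), IsOpen U → volume U ≠ 0 → volume U ≠ ⊤ →
    matLE (∑' q : {q : (ℤ × ℤ) × (ℤ × ℤ) // dyadicRect q ⊆ U},
        ((volume U).toReal)⁻¹ • (hatM d B q.1 * (hatM d B q.1)ᴴ))
      ((C ^ 2) • (1 : Matrix (Fin d) (Fin d) ℂ)) ∧
    matLE (∑' q : {q : (ℤ × ℤ) × (ℤ × ℤ) // dyadicRect q ⊆ U},
        ((volume U).toReal)⁻¹ • ((hatM d B q.1)ᴴ * hatM d B q.1))
      ((C ^ 2) • (1 : Matrix (Fin d) (Fin d) ℂ))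

/-- The dyadic product BMO norm: the least admissible constant. -/
def bmoNorm (d : ℕ) (B : ℝ × ℝ → Matrix (Fin d) (Fin d) ℂ) : ℝ :=
  sInf {C : ℝ | 0 ≤ C ∧ BMOCond d B C}

/-- The `L²(ℝ²; ℂ^d)` norm (with the Euclidean norm on `ℂ^d`). -/
def L2V (d : ℕ) (f : ℝ × ℝ → Fin d → ℂ) : ℝ≥0∞ :=
  eLpNorm (fun p => (WithLp.equiv 2 (Fin d → ℂ)).symm (f p)) 2 volume

/-- Hilbert transform in the first variable, as an a.e. principal value. -/
def H1s (f : ℝ × ℝ → ℂ) (p : ℝ × ℝ) : ℂ :=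
  limUnder (𝓝[>] (0 : ℝ)) fun ε : ℝ =>
    (Real.pi : ℂ)⁻¹ * ∫ z in {z : ℝ | ε < |p.1 - z|}, f (z, p.2) / ((p.1 - z : ℝ) : ℂ)

/-- Hilbert transform in the second variable. -/
def H2s (f : ℝ × ℝ → ℂ) (p : ℝ × ℝ) : ℂ :=
  limUnder (𝓝[>] (0 : ℝ)) fun ε : ℝ =>
    (Real.pi : ℂ)⁻¹ * ∫ z in {z : ℝ | ε < |p.2 - z|}, f (p.1, z) / ((p.2 - z : ℝ) : ℂ)

/-- Componentwise Hilbert transform in the first variable. -/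
def H1v (d : ℕ) (f : ℝ × ℝ → Fin d → ℂ) (p : ℝ × ℝ) (i : Fin d) : ℂ :=
  H1s (fun q => f q i) p

/-- Componentwise Hilbert transform in the second variable. -/
def H2v (d : ℕ) (f : ℝ × ℝ → Fin d → ℂ) (p : ℝ × ℝ) (i : Fin d) : ℂ :=
  H2s (fun q => f q i) p

/-- The iterated commutator `[[M_B, H₁], H₂] f = B H₁H₂ f − H₁(B H₂ f) − H₂(B H₁ f) + H₂H₁(Bf)`. -/
def commH (d : ℕ) (B : ℝ × ℝ → Matrix (Fin d) (Fin d) ℂ) (f : ℝ × ℝ → Fin d → ℂ) :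
    ℝ × ℝ → Fin d → ℂ := fun p =>
  (B p).mulVec (H1v d (H2v d f) p) - H1v d (fun q => (B q).mulVec (H2v d f q)) p
    - H2v d (fun q => (B q).mulVec (H1v d f q)) p
    + H2v d (H1v d (fun q => (B q).mulVec (f q))) p

/-- The scalar iterated commutator `[[M_b, H₁], H₂] f`. -/
def commHs (b f : ℝ × ℝ → ℂ) : ℝ × ℝ → ℂ := fun p =>
  b p * H1s (H2s f) p - H1s (fun q => b q * H2s f q) p - H2s (fun q => b q * H1s f q) p
    + H2s (H1s (fun q => b q * f q)) p

/-- The dyadic-shift image of the Haar function: `Ш(h_I) = (h_{I₋} - h_{I₊})/√2`. -/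
def shHaar (j k : ℤ) (x : ℝ) : ℝ :=
  (haar (j + 1) (2 * k) x - haar (j + 1) (2 * k + 1) x) / Real.sqrt 2

/-- The dyadic shift `Ш f = Σ_{I} ⟨f, h_I⟩ (h_{I₋} - h_{I₊})/√2`, realized pointwise as the
limit of its scale-truncated partial sums. -/
def ShS (f : ℝ → ℂ) (x : ℝ) : ℂ :=
  limUnder atTop fun N : ℕ =>
    ∑ j ∈ Finset.Icc (-(N : ℤ)) (N : ℤ),
      ∑' k : ℤ, (∫ t : ℝ, f t * (haar j k t : ℂ)) * (shHaar j k x : ℂ)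

/-- The dyadic shift in the first variable of a `ℂ^d`-valued function on `ℝ²`. -/
def Sh1 (d : ℕ) (f : ℝ × ℝ → Fin d → ℂ) (p : ℝ × ℝ) (i : Fin d) : ℂ :=
  ShS (fun t => f (t, p.2) i) p.1

/-- The dyadic shift in the second variable of a `ℂ^d`-valued function on `ℝ²`. -/
def Sh2 (d : ℕ) (f : ℝ × ℝ → Fin d → ℂ) (p : ℝ × ℝ) (i : Fin d) : ℂ :=
  ShS (fun t => f (p.1, t) i) p.2

/-- The iterated commutator `[[M_B, Ш₁], Ш₂] f`. -/
def commSh (d : ℕ) (B : ℝ × ℝ → Matrix (Fin d) (Fin d) ℂ) (f : ℝ × ℝ → Fin d → ℂ) :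
    ℝ × ℝ → Fin d → ℂ := fun p =>
  (B p).mulVec (Sh1 d (Sh2 d f) p) - Sh1 d (fun q => (B q).mulVec (Sh2 d f q)) p
    - Sh2 d (fun q => (B q).mulVec (Sh1 d f q)) p
    + Sh2 d (Sh1 d (fun q => (B q).mulVec (f q))) p

/-- One-parameter commutator with the dyadic shift: `[M_g, Ш] u = g·Шu − Ш(gu)`. -/
def commShS (g u : ℝ → ℂ) : ℝ → ℂ := fun x => g x * ShS u x - ShS (fun t => g t * u t) x


/-- Paraproduct `P¹_B f = Σ_{I,J} ε_J B̂(I×J̃) ⟨f, h_I ⊗ h_J⟩ h_I¹ ⊗ h_J |I|^{-1/2}|J̃|^{-1/2}`. -/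
def P1 (d : ℕ) (B : ℝ × ℝ → Matrix (Fin d) (Fin d) ℂ) (ε : ℤ × ℤ → ℝ)
    (f : ℝ × ℝ → Fin d → ℂ) (p : ℝ × ℝ) : Fin d → ℂ :=
  ∑' q : (ℤ × ℤ) × (ℤ × ℤ),
    ((ε q.2 * (haarOne q.1.1 q.1.2 p.1 * haar q.2.1 q.2.2 p.2) *
        (Real.sqrt ((2 : ℝ) ^ q.1.1) * Real.sqrt ((2 : ℝ) ^ (dyadicParent q.2).1)) : ℝ) : ℂ) •
      (hatM d B (q.1, dyadicParent q.2)).mulVec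
        (coefMix d f (haar q.1.1 q.1.2) (haar q.2.1 q.2.2))

/-- Paraproduct `P²_B f = Σ_{I,J} ε_J B̂(I×J̃) ⟨f, h_I¹ ⊗ h_{J̃}⟩ h_I ⊗ h_J |I|^{-1/2}|J̃|^{-1/2}`. -/
def P2 (d : ℕ) (B : ℝ × ℝ → Matrix (Fin d) (Fin d) ℂ) (ε : ℤ × ℤ → ℝ)
    (f : ℝ × ℝ → Fin d → ℂ) (p : ℝ × ℝ) : Fin d → ℂ :=
  ∑' q : (ℤ × ℤ) × (ℤ × ℤ),
    ((ε q.2 * (haar q.1.1 q.1.2 p.1 * haar q.2.1 q.2.2 p.2) *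
        (Real.sqrt ((2 : ℝ) ^ q.1.1) * Real.sqrt ((2 : ℝ) ^ (dyadicParent q.2).1)) : ℝ) : ℂ) •
      (hatM d B (q.1, dyadicParent q.2)).mulVec
        (coefMix d f (haarOne q.1.1 q.1.2) (haar (dyadicParent q.2).1 (dyadicParent q.2).2))

/-- Paraproduct `P³_B f = Σ_{I,J} B̂(I×J) ⟨f, h_I¹ ⊗ h_J¹⟩ h_I ⊗ h_J |I|^{-1/2}|J|^{-1/2}`. -/
def P3 (d : ℕ) (B : ℝ × ℝ → Matrix (Fin d) (Fin d) ℂ)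
    (f : ℝ × ℝ → Fin d → ℂ) (p : ℝ × ℝ) : Fin d → ℂ :=
  ∑' q : (ℤ × ℤ) × (ℤ × ℤ),
    (((haar q.1.1 q.1.2 p.1 * haar q.2.1 q.2.2 p.2) *
        (Real.sqrt ((2 : ℝ) ^ q.1.1) * Real.sqrt ((2 : ℝ) ^ q.2.1)) : ℝ) : ℂ) •
      (hatM d B q).mulVec (coefMix d f (haarOne q.1.1 q.1.2) (haarOne q.2.1 q.2.2))

/-- Paraproduct `P⁴_B f = Σ_{I,J} B̂(I×J) ⟨f, h_I ⊗ h_J¹⟩ h_I¹ ⊗ h_J |I|^{-1/2}|J|^{-1/2}`. -/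
def P4 (d : ℕ) (B : ℝ × ℝ → Matrix (Fin d) (Fin d) ℂ)
    (f : ℝ × ℝ → Fin d → ℂ) (p : ℝ × ℝ) : Fin d → ℂ :=
  ∑' q : (ℤ × ℤ) × (ℤ × ℤ),
    (((haarOne q.1.1 q.1.2 p.1 * haar q.2.1 q.2.2 p.2) *
        (Real.sqrt ((2 : ℝ) ^ q.1.1) * Real.sqrt ((2 : ℝ) ^ q.2.1)) : ℝ) : ℂ) •
      (hatM d B q).mulVec (coefMix d f (haar q.1.1 q.1.2) (haarOne q.2.1 q.2.2))

/-- Paraproduct `P⁵_B f = Σ_{I,J} B̂(I×J) ⟨f, h_I¹ ⊗ h_J⟩ h_I ⊗ h_J¹ |I|^{-1/2}|J|^{-1/2}`. -/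
def P5 (d : ℕ) (B : ℝ × ℝ → Matrix (Fin d) (Fin d) ℂ)
    (f : ℝ × ℝ → Fin d → ℂ) (p : ℝ × ℝ) : Fin d → ℂ :=
  ∑' q : (ℤ × ℤ) × (ℤ × ℤ),
    (((haar q.1.1 q.1.2 p.1 * haarOne q.2.1 q.2.2 p.2) *
        (Real.sqrt ((2 : ℝ) ^ q.1.1) * Real.sqrt ((2 : ℝ) ^ q.2.1)) : ℝ) : ℂ) •
      (hatM d B q).mulVec (coefMix d f (haarOne q.1.1 q.1.2) (haar q.2.1 q.2.2))

/-- The matrix-valued bilinear paraproduct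
`Π₁(f,g) = Σ_{I,J} ⟨g, h_I ⊗ h_J⟩ ⟨f, h_I¹ ⊗ h_J¹⟩* h_I ⊗ h_J |I|^{-1/2}|J|^{-1/2}`. -/
def Pi1 (d : ℕ) (f g : ℝ × ℝ → Fin d → ℂ) (p : ℝ × ℝ) : Matrix (Fin d) (Fin d) ℂ :=
  ∑' q : (ℤ × ℤ) × (ℤ × ℤ),
    (((haar q.1.1 q.1.2 p.1 * haar q.2.1 q.2.2 p.2) *
        (Real.sqrt ((2 : ℝ) ^ q.1.1) * Real.sqrt ((2 : ℝ) ^ q.2.1)) : ℝ) : ℂ) •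
      Matrix.of (fun i l =>
        coefMix d g (haar q.1.1 q.1.2) (haar q.2.1 q.2.2) i *
          (starRingEnd ℂ) (coefMix d f (haarOne q.1.1 q.1.2) (haarOne q.2.1 q.2.2) l))

/-- The matrix-valued bilinear paraproduct
`Π₂(f,g) = Σ_{I,J} ⟨g, h_I¹ ⊗ h_J⟩ ⟨f, h_I ⊗ h_J¹⟩* h_I ⊗ h_J |I|^{-1/2}|J|^{-1/2}`. -/
def Pi2 (d : ℕ) (f g : ℝ × ℝ → Fin d → ℂ) (p : ℝ × ℝ) : Matrix (Fin d) (Fin d) ℂ :=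
  ∑' q : (ℤ × ℤ) × (ℤ × ℤ),
    (((haar q.1.1 q.1.2 p.1 * haar q.2.1 q.2.2 p.2) *
        (Real.sqrt ((2 : ℝ) ^ q.1.1) * Real.sqrt ((2 : ℝ) ^ q.2.1)) : ℝ) : ℂ) •
      Matrix.of (fun i l =>
        coefMix d g (haarOne q.1.1 q.1.2) (haar q.2.1 q.2.2) i *
          (starRingEnd ℂ) (coefMix d f (haar q.1.1 q.1.2) (haarOne q.2.1 q.2.2) l))

/-- The squared Hilbert–Schmidt (Frobenius) norm of a matrix. -/
def hsSq {d : ℕ} (A : Matrix (Fin d) (Fin d) ℂ) : ℝ := ∑ i, ∑ l, ‖A i l‖ ^ 2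

/-- The dyadic square function of a matrix-valued function on `ℝ²`:
`S(F)(x,y) = (Σ_R ‖F̂(R)‖_{HS}² 1_R(x,y)/|R|)^{1/2}`. -/
def sqFnM (d : ℕ) (F : ℝ × ℝ → Matrix (Fin d) (Fin d) ℂ) (p : ℝ × ℝ) : ℝ :=
  Real.sqrt (∑' q : (ℤ × ℤ) × (ℤ × ℤ),
    hsSq (hatM d F q) * (dyadicRect q).indicator (fun _ => (1 : ℝ)) p * (2 : ℝ) ^ (q.1.1 + q.2.1))

/-- The dyadic square function of a `ℂ^d`-valued function on `ℝ²`. -/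
def sqFnV (d : ℕ) (g : ℝ × ℝ → Fin d → ℂ) (p : ℝ × ℝ) : ℝ :=
  Real.sqrt (∑' q : (ℤ × ℤ) × (ℤ × ℤ),
    (∑ i, ‖hatV d g q i‖ ^ 2) * (dyadicRect q).indicator (fun _ => (1 : ℝ)) p *
      (2 : ℝ) ^ (q.1.1 + q.2.1))

/-- The pointwise Euclidean norm `‖f(p)‖_{ℂ^d}`. -/
def vnorm (d : ℕ) (f : ℝ × ℝ → Fin d → ℂ) (p : ℝ × ℝ) : ℝ := Real.sqrt (∑ i, ‖f p i‖ ^ 2)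

/-- The strong (dyadic-rectangle) maximal function. -/
def strongMax (u : ℝ × ℝ → ℝ) (p : ℝ × ℝ) : ℝ≥0∞ :=
  ⨆ (q : (ℤ × ℤ) × (ℤ × ℤ)) (_ : p ∈ dyadicRect q),
    (volume (dyadicRect q))⁻¹ * ∫⁻ x in dyadicRect q, ENNReal.ofReal |u x|

/-- The one-dimensional Hardy–Littlewood maximal function. -/
def M1D (u : ℝ → ℝ) (y : ℝ) : ℝ≥0∞ :=
  ⨆ (a : ℝ) (b : ℝ) (_ : y ∈ Set.Ioo a b),
    (volume (Set.Ioo a b))⁻¹ * ∫⁻ t in Set.Ioo a b, ENNReal.ofReal |u t|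

/-- Average of `f` over the dyadic rectangle indexed by `q`. -/
def rectAvg (f : ℝ × ℝ → ℝ) (q : (ℤ × ℤ) × (ℤ × ℤ)) : ℝ :=
  ((volume (dyadicRect q)).toReal)⁻¹ * ∫ p in dyadicRect q, f p

/-- The scalar dyadic product BMO condition with constant `C`. -/
def scalarBMOCond (b : ℝ × ℝ → ℂ) (C : ℝ) : Prop :=
  ∀ U : Set (ℝ × ℝ), IsOpen U → volume U ≠ 0 → volume U ≠ ⊤ →
    ((volume U).toReal)⁻¹ *
      (∑' q : {q : (ℤ × ℤ) × (ℤ × ℤ) // dyadicRect q ⊆ U}, ‖hatS b q.1‖ ^ 2) ≤ C ^ 2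

/-- The scalar dyadic product BMO norm, as a supremum over open sets. -/
def scalarBmoNorm (b : ℝ × ℝ → ℂ) : ℝ :=
  ⨆ U : Set (ℝ × ℝ), ⨆ (_ : IsOpen U ∧ volume U ≠ 0 ∧ volume U ≠ ⊤),
    Real.sqrt (((volume U).toReal)⁻¹ *
      ∑' q : {q : (ℤ × ℤ) × (ℤ × ℤ) // dyadicRect q ⊆ U}, ‖hatS b q.1‖ ^ 2)

section LayerCake

variable {α : Type*} [MeasurableSpace α] {μ : Measure α}

theorem lintegral_Ioi_rpow_eq_top (p : ℝ) :
    ∫⁻ t in Ioi (0 : ℝ), ENNReal.ofReal (t ^ p) = ⊤ := by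
  by_contra h
  refine not_integrableOn_Ioi_rpow p ?_
  refine ⟨(measurable_id.pow_const p).aestronglyMeasurable, ?_⟩
  refine (hasFiniteIntegral_iff_ofReal ?_).2 (lt_top_iff_ne_top.2 h)
  filter_upwards [ae_restrict_mem measurableSet_Ioi] with t ht using Real.rpow_nonneg ht.le p

theorem lintegral_rpow_eq_lintegral_measure_lt_mul {f : α → ℝ≥0∞} (hf : AEMeasurable f μ)
    {p : ℝ} (hp : 0 < p) :
    ∫⁻ a, f a ^ p ∂μ = ENNReal.ofReal p *
      ∫⁻ t in Ioi (0 : ℝ), μ {a | ENNReal.ofReal t < f a} * ENNReal.ofReal (t ^ (p - 1)) := by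
  by_cases hfin : μ {a | f a = ⊤} = 0
  · have hlt : ∀ᵐ a ∂μ, f a ≠ ⊤ := by simpa [ae_iff] using hfin
    have hlayer := lintegral_rpow_eq_lintegral_meas_lt_mul μ
      (Eventually.of_forall fun a => (toReal_nonneg : 0 ≤ (f a).toReal)) hf.ennreal_toReal hp
    convert hlayer using 1
    · refine lintegral_congr_ae ?_
      filter_upwards [hlt] with a ha
      rw [← ofReal_rpow_of_nonneg toReal_nonneg hp.le, ofReal_toReal ha]
    · congr 1
      refine setLIntegral_congr_fun measurableSet_Ioi fun t ht => ?_
      congr 1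
      refine measure_congr ?_
      filter_upwards [hlt] with a ha
      exact propext (ofReal_lt_iff_lt_toReal ht.le ha)
  · have hleft : ∫⁻ a, f a ^ p ∂μ = ⊤ := by
      refine lintegral_eq_top_of_measure_eq_top_ne_zero (hf.pow_const p) ?_
      simpa [rpow_eq_top_iff, hp, hp.not_gt] using hfin
    have hright : ∫⁻ t in Ioi (0 : ℝ),
        μ {a | ENNReal.ofReal t < f a} * ENNReal.ofReal (t ^ (p - 1)) = ⊤ := by
      refine top_unique ?_
      calc (⊤ : ℝ≥0∞)
          = μ {a | f a = ⊤} * ∫⁻ t in Ioi (0 : ℝ), ENNReal.ofReal (t ^ (p - 1)) := by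
            rw [lintegral_Ioi_rpow_eq_top, mul_top hfin]
        _ = ∫⁻ t in Ioi (0 : ℝ), μ {a | f a = ⊤} * ENNReal.ofReal (t ^ (p - 1)) := by
            rw [lintegral_const_mul _ (by fun_prop)]
        _ ≤ ∫⁻ t in Ioi (0 : ℝ),
              μ {a | ENNReal.ofReal t < f a} * ENNReal.ofReal (t ^ (p - 1)) := by
            gcongr with t a
            exact fun ha => ha ▸ ofReal_lt_top
    rw [hleft, hright, mul_top (by simpa using hp)]

theorem lintegral_rpow_mul_eq_lintegral_setLIntegral_lt_mul {f g : α → ℝ≥0∞}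
    (hf : AEMeasurable f μ) (hg : AEMeasurable g μ) {p : ℝ} (hp : 0 < p) :
    ∫⁻ a, f a ^ p * g a ∂μ = ENNReal.ofReal p *
      ∫⁻ t in Ioi (0 : ℝ),
        (∫⁻ a in {a | ENNReal.ofReal t < f a}, g a ∂μ) * ENNReal.ofReal (t ^ (p - 1)) := by
  have hfg : AEMeasurable f (μ.withDensity g) :=
    hf.mono_ac (withDensity_absolutelyContinuous μ g)
  have hlevel (t : ℝ) : μ.withDensity g {a | ENNReal.ofReal t < f a} =
      ∫⁻ a in {a | ENNReal.ofReal t < f a}, g a ∂μ :=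
    withDensity_apply₀ _ (nullMeasurableSet_lt aemeasurable_const hf)
  have hlayer := lintegral_rpow_eq_lintegral_measure_lt_mul hfg hp
  rw [lintegral_withDensity_eq_lintegral_mul₀ hg (hf.pow_const p)] at hlayer
  simpa only [Pi.mul_apply, mul_comm (g _), hlevel] using hlayer

theorem lintegral_Ioi_setLIntegral_lt_two_mul {u : α → ℝ≥0∞} (hu : AEMeasurable u μ) {p : ℝ}
    (hp : 1 < p) :
    ∫⁻ t in Ioi (0 : ℝ), (∫⁻ a in {a | ENNReal.ofReal t < 2 * u a}, u a ∂μ) *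
        ENNReal.ofReal (t ^ (p - 1 - 1)) =
      ENNReal.ofReal (2 ^ (p - 1) / (p - 1)) * ∫⁻ a, u a ^ p ∂μ := by
  have hp' : 0 < p - 1 := sub_pos.2 hp
  have hpow (x : ℝ≥0∞) : (2 * x) ^ (p - 1) * x = ENNReal.ofReal (2 ^ (p - 1)) * x ^ p := by
    rw [mul_rpow_of_nonneg _ _ hp'.le, mul_assoc, ← ofReal_rpow_of_pos two_pos, ofReal_ofNat]
    congr 1
    nth_rewrite 2 [← rpow_one x]
    rw [← rpow_add_of_nonneg _ _ hp'.le one_pos.le, sub_add_cancel]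
  have hlayer := lintegral_rpow_mul_eq_lintegral_setLIntegral_lt_mul (hu.const_mul 2) hu hp'
  simp_rw [hpow] at hlayer
  rw [lintegral_const_mul' _ _ ofReal_ne_top] at hlayer
  rw [ofReal_div_of_pos hp', div_eq_mul_inv, mul_right_comm, hlayer, mul_right_comm,
    ENNReal.mul_inv_cancel (by simpa using hp) ofReal_ne_top, one_mul]

end LayerCake

section MaximalFunction

variable {X : Type*} [PseudoMetricSpace X] [MeasurableSpace X]

/-- The uncentred Hardy–Littlewood maximal function of `u`, the supremum being over all open balls
containing the point. -/
def maximalFunction (μ : Measure X) (u : X → ℝ≥0∞) (y : X) : ℝ≥0∞ :=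
  ⨆ (x : X) (r : ℝ) (_ : y ∈ Metric.ball x r), ⨍⁻ t in Metric.ball x r, u t ∂μ

variable {μ : Measure X} {u v : X → ℝ≥0∞}

theorem lt_maximalFunction_iff {c : ℝ≥0∞} {y : X} :
    c < maximalFunction μ u y ↔
      ∃ x r, y ∈ Metric.ball x r ∧ c < ⨍⁻ t in Metric.ball x r, u t ∂μ := by
  simp only [maximalFunction, lt_iSup_iff, exists_prop]

theorem setOf_lt_maximalFunction (c : ℝ≥0∞) :
    {y | c < maximalFunction μ u y} =
      ⋃ b ∈ {b : X × ℝ | c < ⨍⁻ t in Metric.ball b.1 b.2, u t ∂μ}, Metric.ball b.1 b.2 := by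
  ext y
  simp only [mem_ofPred_eq, lt_maximalFunction_iff, mem_iUnion, exists_prop, Prod.exists,
    and_comm]

theorem measurable_maximalFunction [OpensMeasurableSpace X] :
    Measurable (maximalFunction μ u) := by
  refine measurable_of_Ioi fun c => IsOpen.measurableSet ?_
  change IsOpen {y | c < maximalFunction μ u y}
  rw [setOf_lt_maximalFunction]
  exact isOpen_biUnion fun _ _ => Metric.isOpen_ball

theorem maximalFunction_congr_ae (h : u =ᵐ[μ] v) :
    maximalFunction μ u = maximalFunction μ v := by
  ext y
  simp only [maximalFunction, setLAverage_eq, lintegral_congr_ae (ae_restrict_of_ae h)]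

theorem maximalFunction_le_add_const {c : ℝ≥0∞} (h : ∀ y, u y ≤ v y + c) (y : X) :
    maximalFunction μ u y ≤ maximalFunction μ v y + c := by
  refine iSup_le fun x => iSup₂_le fun r hy => ?_
  calc ⨍⁻ t in Metric.ball x r, u t ∂μ
      ≤ ⨍⁻ t in Metric.ball x r, (v t + c) ∂μ := lintegral_mono h
    _ ≤ ⨍⁻ t in Metric.ball x r, v t ∂μ + c := by
        rw [laverage_eq', lintegral_add_right _ measurable_const, lintegral_const,
          ← laverage_eq']
        gcongr
        simpa [mul_comm] using mul_le_mul_right (ENNReal.inv_mul_le_one (μ (Metric.ball x r))) c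
    _ ≤ maximalFunction μ v y + c := by
        gcongr
        exact le_iSup_of_le x <| le_iSup₂_of_le r hy le_rfl

end MaximalFunction

section Doubling

variable {X : Type*} [PseudoMetricSpace X] [MeasurableSpace X]

/-- The doubling condition with constant `A`. Mathlib's `IsUnifLocDoublingMeasure` only controls
balls of small radius, whereas the maximal function involves balls of all sizes. -/
def IsDoublingWith (A : NNReal) (μ : Measure X) : Prop :=
  ∀ x r, μ (Metric.ball x (2 * r)) ≤ A * μ (Metric.ball x r)

theorem IsDoublingWith.measure_ball_four_mul_le {A : NNReal} {μ : Measure X}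
    (hμ : IsDoublingWith A μ) (x : X) (r : ℝ) :
    μ (Metric.ball x (4 * r)) ≤ (A : ℝ≥0∞) ^ 2 * μ (Metric.ball x r) :=
  calc μ (Metric.ball x (4 * r)) = μ (Metric.ball x (2 * (2 * r))) := by ring_nf
    _ ≤ A * μ (Metric.ball x (2 * r)) := hμ x _
    _ ≤ A * (A * μ (Metric.ball x r)) := by gcongr; exact hμ x r
    _ = (A : ℝ≥0∞) ^ 2 * μ (Metric.ball x r) := by ring

theorem isDoublingWith_addHaar {V : Type*} [NormedAddCommGroup V] [NormedSpace ℝ V]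
    [FiniteDimensional ℝ V] [MeasurableSpace V] [BorelSpace V]
    (μ : Measure V) [μ.IsAddHaarMeasure] :
    IsDoublingWith ((2 : NNReal) ^ Module.finrank ℝ V) μ := by
  intro x r
  rw [Measure.addHaar_ball_mul_of_pos μ x two_pos]
  simp [Measure.addHaar_ball_center]

end Doubling

section WeakType

theorem mul_tsum_measure_le_lintegral {α ι : Type*} [MeasurableSpace α] {μ : Measure α}
    {u : α → ℝ≥0∞} {c : ℝ≥0∞} {t : Set ι} (ht : t.Countable) {B : ι → Set α}
    (hB : ∀ i ∈ t, MeasurableSet (B i)) (hdisj : t.PairwiseDisjoint B)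
    (hc : ∀ i ∈ t, c * μ (B i) ≤ ∫⁻ y in B i, u y ∂μ) :
    c * ∑' i : t, μ (B i) ≤ ∫⁻ y, u y ∂μ :=
  calc c * ∑' i : t, μ (B i)
      = ∑' i : t, c * μ (B i) := ENNReal.tsum_mul_left.symm
    _ ≤ ∑' i : t, ∫⁻ y in B i, u y ∂μ := ENNReal.tsum_le_tsum fun i => hc i i.2
    _ = ∫⁻ y in ⋃ i ∈ t, B i, u y ∂μ := (lintegral_biUnion ht hB hdisj u).symm
    _ ≤ ∫⁻ y, u y ∂μ := setLIntegral_le_lintegral _ _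

variable {X : Type*} [PseudoMetricSpace X] [MeasurableSpace X] [OpensMeasurableSpace X]
  [TopologicalSpace.SeparableSpace X] {μ : Measure X} {A : NNReal} {u : X → ℝ≥0∞} {c : ℝ≥0∞}

theorem IsDoublingWith.mul_measure_biUnion_ball_le_of_radius_le (hμ : IsDoublingWith A μ)
    {s : Set (X × ℝ)} {R : ℝ} (hR : ∀ b ∈ s, b.2 ≤ R) (hpos : ∀ b ∈ s, 0 < b.2)
    (hc : ∀ b ∈ s, c * μ (Metric.ball b.1 b.2) ≤ ∫⁻ y in Metric.ball b.1 b.2, u y ∂μ) :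
    c * μ (⋃ b ∈ s, Metric.ball b.1 b.2) ≤ A ^ 2 * ∫⁻ y, u y ∂μ := by
  obtain ⟨t, hts, hdisj, hcover⟩ := Vitali.exists_disjoint_subfamily_covering_enlargement_ball
    s Prod.fst Prod.snd R hR 4 (by norm_num)
  have hcount : t.Countable := hdisj.countable_of_isOpen (fun _ _ => Metric.isOpen_ball)
    fun b hb => Metric.nonempty_ball.2 (hpos b (hts hb))
  have hsum : c * ∑' b : t, μ (Metric.ball b.1.1 b.1.2) ≤ ∫⁻ y, u y ∂μ :=
    mul_tsum_measure_le_lintegral hcount (fun _ _ => measurableSet_ball) hdisj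
      fun b hb => hc b (hts hb)
  have hsubset : ⋃ b ∈ s, Metric.ball b.1 b.2 ⊆ ⋃ b ∈ t, Metric.ball b.1 (4 * b.2) := by
    refine iUnion₂_subset fun b hb => ?_
    obtain ⟨b', hb', hbb'⟩ := hcover b hb
    exact hbb'.trans (subset_biUnion_of_mem (u := fun b : X × ℝ => Metric.ball b.1 (4 * b.2)) hb')
  calc c * μ (⋃ b ∈ s, Metric.ball b.1 b.2)
      ≤ c * ∑' b : t, μ (Metric.ball b.1.1 (4 * b.1.2)) := by
        gcongr
        exact (measure_mono hsubset).trans (measure_biUnion_le μ hcount _)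
    _ ≤ c * ∑' b : t, A ^ 2 * μ (Metric.ball b.1.1 b.1.2) := by
        gcongr
        exact hμ.measure_ball_four_mul_le _ _
    _ = A ^ 2 * (c * ∑' b : t, μ (Metric.ball b.1.1 b.1.2)) := by
        rw [ENNReal.tsum_mul_left, mul_left_comm]
    _ ≤ A ^ 2 * ∫⁻ y, u y ∂μ := by gcongr

theorem IsDoublingWith.mul_measure_biUnion_ball_le (hμ : IsDoublingWith A μ)
    {s : Set (X × ℝ)} (hpos : ∀ b ∈ s, 0 < b.2)
    (hc : ∀ b ∈ s, c * μ (Metric.ball b.1 b.2) ≤ ∫⁻ y in Metric.ball b.1 b.2, u y ∂μ) :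
    c * μ (⋃ b ∈ s, Metric.ball b.1 b.2) ≤ A ^ 2 * ∫⁻ y, u y ∂μ := by
  let S (n : ℕ) : Set (X × ℝ) := {b ∈ s | b.2 ≤ n}
  have hS : Monotone S := fun m n hmn b hb => ⟨hb.1, hb.2.trans (by exact_mod_cast hmn)⟩
  have hunion : ⋃ b ∈ s, Metric.ball b.1 b.2 = ⋃ n, ⋃ b ∈ S n, Metric.ball b.1 b.2 := by
    refine (iUnion₂_subset fun b hb => ?_).antisymm
      (iUnion_subset fun n => biUnion_subset_biUnion_left fun b hb => hb.1)
    obtain ⟨n, hn⟩ := exists_nat_ge b.2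
    exact subset_iUnion_of_subset n
      (subset_biUnion_of_mem (u := fun b : X × ℝ => Metric.ball b.1 b.2) ⟨hb, hn⟩)
  rw [hunion, Monotone.measure_iUnion fun m n hmn => biUnion_subset_biUnion_left (hS hmn),
    ENNReal.mul_iSup]
  exact iSup_le fun n => hμ.mul_measure_biUnion_ball_le_of_radius_le (fun b hb => hb.2)
    (fun b hb => hpos b hb.1) fun b hb => hc b hb.1

theorem IsDoublingWith.mul_measure_lt_maximalFunction_le (hμ : IsDoublingWith A μ)
    (u : X → ℝ≥0∞) (c : ℝ≥0∞) :
    c * μ {y | c < maximalFunction μ u y} ≤ A ^ 2 * ∫⁻ y, u y ∂μ := by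
  rw [setOf_lt_maximalFunction]
  refine hμ.mul_measure_biUnion_ball_le (fun b hb => ?_) fun b hb => ?_
  · by_contra! hr
    simp [Metric.ball_eq_empty.2 hr] at hb
  · rw [mem_ofPred_eq, setLAverage_eq] at hb
    exact (ENNReal.mul_lt_of_lt_div hb).le

end WeakType

section StrongType

variable {X : Type*} [PseudoMetricSpace X] [MeasurableSpace X] [OpensMeasurableSpace X]
  [TopologicalSpace.SeparableSpace X] {μ : Measure X} {A : NNReal} {u : X → ℝ≥0∞}

/-- The part of `u` below the height `r / 2` raises the maximal function by at most `r / 2`, so the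
level set at height `r` is governed by the part of `u` above `r / 2`. -/
theorem IsDoublingWith.ofReal_half_mul_measure_lt_maximalFunction_le (hμ : IsDoublingWith A μ)
    (hu : AEMeasurable u μ) (r : ℝ) :
    ENNReal.ofReal (r / 2) * μ {y | ENNReal.ofReal r < maximalFunction μ u y} ≤
      A ^ 2 * ∫⁻ y in {y | ENNReal.ofReal r < 2 * u y}, u y ∂μ := by
  set S := {y | ENNReal.ofReal r < 2 * u y} with hS
  have hSm : NullMeasurableSet S μ := nullMeasurableSet_lt aemeasurable_const (hu.const_mul 2)
  have hhalf : ENNReal.ofReal r = ENNReal.ofReal (r / 2) + ENNReal.ofReal (r / 2) := by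
    rw [← two_mul, ← ofReal_ofNat, ← ofReal_mul two_pos.le, mul_div_cancel₀ r two_ne_zero]
  have hsplit (y : X) : u y ≤ S.indicator u y + ENNReal.ofReal (r / 2) := by
    by_cases hy : y ∈ S
    · simp [hy]
    · rw [indicator_of_notMem hy, zero_add]
      rw [hS, mem_ofPred_eq, not_lt, hhalf, ← two_mul] at hy
      exact (ENNReal.mul_le_mul_iff_right two_ne_zero ofNat_ne_top).1 hy
  have hsubset : {y | ENNReal.ofReal r < maximalFunction μ u y} ⊆
      {y | ENNReal.ofReal (r / 2) < maximalFunction μ (S.indicator u) y} := fun y hy =>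
    lt_of_add_lt_add_right <|
      (hhalf ▸ mem_ofPred.1 hy).trans_le (maximalFunction_le_add_const hsplit y)
  calc ENNReal.ofReal (r / 2) * μ {y | ENNReal.ofReal r < maximalFunction μ u y}
      ≤ ENNReal.ofReal (r / 2) *
          μ {y | ENNReal.ofReal (r / 2) < maximalFunction μ (S.indicator u) y} := by gcongr
    _ ≤ A ^ 2 * ∫⁻ y, S.indicator u y ∂μ := hμ.mul_measure_lt_maximalFunction_le _ _
    _ = A ^ 2 * ∫⁻ y in S, u y ∂μ := by rw [lintegral_indicator₀ hSm]

theorem IsDoublingWith.measure_lt_maximalFunction_mul_rpow_le (hμ : IsDoublingWith A μ)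
    (hu : AEMeasurable u μ) (p : ℝ) {r : ℝ} (hr : 0 < r) :
    μ {y | ENNReal.ofReal r < maximalFunction μ u y} * ENNReal.ofReal (r ^ p) ≤
      2 * A ^ 2 * ((∫⁻ y in {y | ENNReal.ofReal r < 2 * u y}, u y ∂μ) *
        ENNReal.ofReal (r ^ (p - 1))) := by
  have hpow : ENNReal.ofReal (r ^ p) =
      2 * ENNReal.ofReal (r / 2) * ENNReal.ofReal (r ^ (p - 1)) := by
    rw [← ofReal_ofNat, ← ofReal_mul two_pos.le, ← ofReal_mul (by positivity),
      Real.rpow_sub_one hr.ne']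
    congr 1
    field_simp
  calc μ {y | ENNReal.ofReal r < maximalFunction μ u y} * ENNReal.ofReal (r ^ p)
      = 2 * (ENNReal.ofReal (r / 2) * μ {y | ENNReal.ofReal r < maximalFunction μ u y}) *
          ENNReal.ofReal (r ^ (p - 1)) := by rw [hpow]; ring
    _ ≤ 2 * (A ^ 2 * ∫⁻ y in {y | ENNReal.ofReal r < 2 * u y}, u y ∂μ) *
          ENNReal.ofReal (r ^ (p - 1)) := by
        gcongr 2 * ?_ * _
        exact hμ.ofReal_half_mul_measure_lt_maximalFunction_le hu r
    _ = _ := by ring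

theorem IsDoublingWith.lintegral_maximalFunction_rpow_le (hμ : IsDoublingWith A μ)
    (hu : AEMeasurable u μ) {p : ℝ} (hp : 1 < p) :
    ∫⁻ y, maximalFunction μ u y ^ p ∂μ ≤
      A ^ 2 * ENNReal.ofReal (2 ^ p * p / (p - 1)) * ∫⁻ y, u y ^ p ∂μ := by
  have hp0 : 0 < p := one_pos.trans hp
  have hconst : ENNReal.ofReal (2 ^ p * p / (p - 1)) =
      ENNReal.ofReal p * (2 * ENNReal.ofReal (2 ^ (p - 1) / (p - 1))) := by
    rw [← ofReal_ofNat, ← ofReal_mul two_pos.le, ← ofReal_mul hp0.le,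
      Real.rpow_sub_one two_ne_zero]
    congr 1
    ring
  calc ∫⁻ y, maximalFunction μ u y ^ p ∂μ
      = ENNReal.ofReal p * ∫⁻ t in Ioi (0 : ℝ),
          μ {y | ENNReal.ofReal t < maximalFunction μ u y} * ENNReal.ofReal (t ^ (p - 1)) :=
        lintegral_rpow_eq_lintegral_measure_lt_mul measurable_maximalFunction.aemeasurable hp0
    _ ≤ ENNReal.ofReal p * ∫⁻ t in Ioi (0 : ℝ),
          2 * A ^ 2 * ((∫⁻ y in {y | ENNReal.ofReal t < 2 * u y}, u y ∂μ) *
            ENNReal.ofReal (t ^ (p - 1 - 1))) := by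
        gcongr ENNReal.ofReal p * ?_
        exact setLIntegral_mono' measurableSet_Ioi fun t ht =>
          hμ.measure_lt_maximalFunction_mul_rpow_le hu (p - 1) ht
    _ = A ^ 2 * ENNReal.ofReal (2 ^ p * p / (p - 1)) * ∫⁻ y, u y ^ p ∂μ := by
        rw [lintegral_const_mul' _ _ (by finiteness),
          lintegral_Ioi_setLIntegral_lt_two_mul hu hp, hconst]
        ring

theorem IsDoublingWith.lintegral_maximalFunction_sq_le (hμ : IsDoublingWith A μ)
    (hu : AEMeasurable u μ) :
    ∫⁻ y, maximalFunction μ u y ^ 2 ∂μ ≤ 8 * A ^ 2 * ∫⁻ y, u y ^ 2 ∂μ := by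
  have hconst : ENNReal.ofReal (2 ^ (2 : ℝ) * 2 / (2 - 1)) = 8 := by norm_num
  simpa only [rpow_two, hconst, mul_comm (8 : ℝ≥0∞)] using
    hμ.lintegral_maximalFunction_rpow_le hu one_lt_two

end StrongType

theorem eLpNorm_two_sq {α E : Type*} [MeasurableSpace α] {μ : Measure α} [TopologicalSpace E]
    [ContinuousENorm E] (f : α → E) : eLpNorm f 2 μ ^ 2 = ∫⁻ x, ‖f x‖ₑ ^ 2 ∂μ := by
  simpa using eLpNorm_nnreal_pow_eq_lintegral (f := f) (μ := μ) (p := 2) two_ne_zero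

section Bessel

open scoped ComplexConjugate InnerProductSpace

variable {X 𝕜 E : Type*} [MeasurableSpace X] {μ : Measure X} [RCLike 𝕜]
  [NormedAddCommGroup E] [InnerProductSpace 𝕜 E]

/-- The elementary tensor `x ↦ φ x • c` as an element of `L²(X; E)`. -/
def tensorLp (φ : Lp 𝕜 2 μ) (c : E) : Lp E 2 μ :=
  (ContinuousLinearMap.toSpanSingleton 𝕜 c).compLp φ

theorem coeFn_tensorLp (φ : Lp 𝕜 2 μ) (c : E) : tensorLp φ c =ᵐ[μ] fun x => φ x • c :=
  (ContinuousLinearMap.toSpanSingleton 𝕜 c).coeFn_compLp φ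

theorem integrable_conj_smul (φ : Lp 𝕜 2 μ) {f : X → E} (hf : MemLp f 2 μ) :
    Integrable (fun x => conj (φ x) • f x) μ :=
  memLp_one_iff_integrable.1 (hf.smul (Lp.memLp φ).star)

variable [NormedSpace ℝ E]

/-- The vector-valued coefficient `∫ conj φ • f` of `f : X → E` along a scalar function `φ`. It
equals `0` when the integrand is not integrable. -/
def coeffLp (φ : Lp 𝕜 2 μ) (f : X → E) : E :=
  ∫ x, conj (φ x) • f x ∂μ

variable [CompleteSpace E]

theorem inner_tensorLp_left (φ : Lp 𝕜 2 μ) (c : E) (F : Lp E 2 μ) :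
    ⟪tensorLp φ c, F⟫_𝕜 = ⟪c, coeffLp φ F⟫_𝕜 := by
  rw [L2.inner_def, coeffLp, ← integral_inner (integrable_conj_smul φ (Lp.memLp F))]
  refine integral_congr_ae ?_
  filter_upwards [coeFn_tensorLp φ c] with x hx
  rw [hx, inner_smul_left, inner_smul_right]

theorem coeffLp_tensorLp (φ ψ : Lp 𝕜 2 μ) (c : E) :
    coeffLp φ (tensorLp ψ c) = ⟪φ, ψ⟫_𝕜 • c := by
  rw [L2.inner_def, ← integral_smul_const]
  refine integral_congr_ae ?_
  filter_upwards [coeFn_tensorLp ψ c] with x hx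
  rw [hx, smul_smul, RCLike.inner_apply, mul_comm]

theorem inner_tensorLp_tensorLp (φ ψ : Lp 𝕜 2 μ) (c c' : E) :
    ⟪tensorLp φ c, tensorLp ψ c'⟫_𝕜 = ⟪φ, ψ⟫_𝕜 * ⟪c, c'⟫_𝕜 := by
  rw [inner_tensorLp_left, coeffLp_tensorLp, inner_smul_right]

variable {ι : Type*} {v : ι → Lp 𝕜 2 μ}

theorem norm_sum_tensorLp_sq (hv : Orthonormal 𝕜 v) (s : Finset ι) (c : ι → E) :
    ‖∑ i ∈ s, tensorLp (v i) (c i)‖ ^ 2 = ∑ i ∈ s, ‖c i‖ ^ 2 := by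
  classical
  rw [← inner_self_eq_norm_sq (𝕜 := 𝕜), sum_inner]
  simp [inner_sum, inner_tensorLp_tensorLp, orthonormal_iff_ite.1 hv]

theorem sum_norm_coeffLp_sq_le (hv : Orthonormal 𝕜 v) (s : Finset ι) (F : Lp E 2 μ) :
    ∑ i ∈ s, ‖coeffLp (v i) F‖ ^ 2 ≤ ‖F‖ ^ 2 := by
  set G : Lp E 2 μ := ∑ i ∈ s, tensorLp (v i) (coeffLp (v i) F)
  have hG : ‖G‖ ^ 2 = ∑ i ∈ s, ‖coeffLp (v i) F‖ ^ 2 := norm_sum_tensorLp_sq hv s _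
  have hGF : RCLike.re ⟪G, F⟫_𝕜 = ‖G‖ ^ 2 := by
    simp [G, hG, sum_inner, inner_tensorLp_left]
  rw [← hG]
  nlinarith [re_inner_le_norm (𝕜 := 𝕜) G F, sq_nonneg (‖G‖ - ‖F‖)]

theorem tsum_enorm_coeffLp_sq_le (hv : Orthonormal 𝕜 v) {f : X → E}
    (hf : AEStronglyMeasurable f μ) :
    ∑' i, ‖coeffLp (v i) f‖ₑ ^ 2 ≤ ∫⁻ x, ‖f x‖ₑ ^ 2 ∂μ := by
  rw [← eLpNorm_two_sq]
  by_cases htop : eLpNorm f 2 μ = ⊤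
  · simp [htop]
  have hmem : MemLp f 2 μ := ⟨hf, lt_top_iff_ne_top.2 htop⟩
  have hcoeff (i : ι) : coeffLp (v i) f = coeffLp (v i) (hmem.toLp f) := by
    refine integral_congr_ae ?_
    filter_upwards [hmem.coeFn_toLp] with x hx
    rw [hx]
  rw [ENNReal.tsum_eq_iSup_sum]
  refine iSup_le fun s => ?_
  calc ∑ i ∈ s, ‖coeffLp (v i) f‖ₑ ^ 2
      = ENNReal.ofReal (∑ i ∈ s, ‖coeffLp (v i) (hmem.toLp f)‖ ^ 2) := by
        rw [ENNReal.ofReal_sum_of_nonneg fun _ _ => by positivity]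
        simp [hcoeff, ENNReal.ofReal_pow]
    _ ≤ ENNReal.ofReal (‖hmem.toLp f‖ ^ 2) :=
        ENNReal.ofReal_le_ofReal (sum_norm_coeffLp_sq_le hv s _)
    _ = eLpNorm f 2 μ ^ 2 := by
        rw [ENNReal.ofReal_pow (norm_nonneg _), ofReal_norm, Lp.enorm_toLp]

end Bessel

section HybridBound

variable {X Y 𝕜 E ι : Type*} [MeasurableSpace X] {μ : Measure X} [SFinite μ] [RCLike 𝕜]
  [NormedAddCommGroup E] [InnerProductSpace 𝕜 E] [NormedSpace ℝ E]

theorem aestronglyMeasurable_coeffLp_section [MeasurableSpace Y] {ν : Measure Y} [SFinite ν]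
    {f : X × Y → E} (hf : AEStronglyMeasurable f (μ.prod ν)) (φ : Lp 𝕜 2 μ) :
    AEStronglyMeasurable (fun y => coeffLp φ fun x => f (x, y)) ν :=
  ((Lp.aestronglyMeasurable φ).star.comp_snd.smul hf.prod_swap).integral_prod_right'

variable [CompleteSpace E] [Countable ι] {v : ι → Lp 𝕜 2 μ}

theorem tsum_lintegral_enorm_coeffLp_section_sq_le [MeasurableSpace Y] {ν : Measure Y}
    [SFinite ν] (hv : Orthonormal 𝕜 v) {f : X × Y → E}
    (hf : AEStronglyMeasurable f (μ.prod ν)) :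
    ∑' i, ∫⁻ y, ‖coeffLp (v i) fun x => f (x, y)‖ₑ ^ 2 ∂ν ≤ ∫⁻ p, ‖f p‖ₑ ^ 2 ∂μ.prod ν := by
  have hsection : ∀ᵐ y ∂ν, AEStronglyMeasurable (fun x => f (x, y)) μ :=
    hf.prod_swap.prodMk_left
  calc ∑' i, ∫⁻ y, ‖coeffLp (v i) fun x => f (x, y)‖ₑ ^ 2 ∂ν
      = ∫⁻ y, ∑' i, ‖coeffLp (v i) fun x => f (x, y)‖ₑ ^ 2 ∂ν :=
        (lintegral_tsum fun i =>
          (aestronglyMeasurable_coeffLp_section hf (v i)).enorm.pow_const 2).symm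
    _ ≤ ∫⁻ y, ∫⁻ x, ‖f (x, y)‖ₑ ^ 2 ∂μ ∂ν := by
        refine lintegral_mono_ae ?_
        filter_upwards [hsection] with y hy using tsum_enorm_coeffLp_sq_le hv hy
    _ = ∫⁻ p, ‖f p‖ₑ ^ 2 ∂μ.prod ν := (lintegral_prod_symm _ (hf.enorm.pow_const 2)).symm

variable [PseudoMetricSpace Y] [MeasurableSpace Y] [OpensMeasurableSpace Y]
  [TopologicalSpace.SeparableSpace Y] {ν : Measure Y} [SFinite ν] {A : NNReal}

theorem IsDoublingWith.lintegral_tsum_maximalFunction_coeffLp_sq_le (hν : IsDoublingWith A ν)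
    (hv : Orthonormal 𝕜 v) {w : ι → X → ℝ≥0∞} (hw : ∀ i, AEMeasurable (w i) μ)
    (hw_int : ∀ i, ∫⁻ x, w i x ∂μ ≤ 1) {f : X × Y → E}
    (hf : AEStronglyMeasurable f (μ.prod ν)) :
    ∫⁻ p, ∑' i, maximalFunction ν (fun y => ‖coeffLp (v i) fun x => f (x, y)‖ₑ) p.2 ^ 2 *
        w i p.1 ∂μ.prod ν ≤
      8 * A ^ 2 * ∫⁻ p, ‖f p‖ₑ ^ 2 ∂μ.prod ν := by
  set g : ι → Y → ℝ≥0∞ := fun i y => ‖coeffLp (v i) fun x => f (x, y)‖ₑ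
  have hg (i : ι) : AEMeasurable (g i) ν :=
    (aestronglyMeasurable_coeffLp_section hf (v i)).enorm
  have hM (i : ι) : AEMeasurable (fun y => maximalFunction ν (g i) y ^ 2) ν :=
    (measurable_maximalFunction.pow_const 2).aemeasurable
  calc ∫⁻ p, ∑' i, maximalFunction ν (g i) p.2 ^ 2 * w i p.1 ∂μ.prod ν
      = ∑' i, ∫⁻ p, w i p.1 * maximalFunction ν (g i) p.2 ^ 2 ∂μ.prod ν := by
        simp_rw [mul_comm (maximalFunction _ _ _ ^ 2)]
        exact lintegral_tsum fun i => (hw i).comp_fst.mul (hM i).comp_snd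
    _ = ∑' i, (∫⁻ x, w i x ∂μ) * ∫⁻ y, maximalFunction ν (g i) y ^ 2 ∂ν :=
        tsum_congr fun i => lintegral_prod_mul (hw i) (hM i)
    _ ≤ ∑' i, 1 * (8 * A ^ 2 * ∫⁻ y, g i y ^ 2 ∂ν) :=
        ENNReal.tsum_le_tsum fun i =>
          mul_le_mul' (hw_int i) (hν.lintegral_maximalFunction_sq_le (hg i))
    _ = 8 * A ^ 2 * ∑' i, ∫⁻ y, g i y ^ 2 ∂ν := by simp_rw [one_mul, ENNReal.tsum_mul_left]
    _ ≤ 8 * A ^ 2 * ∫⁻ p, ‖f p‖ₑ ^ 2 ∂μ.prod ν := by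
        gcongr
        exact tsum_lintegral_enorm_coeffLp_section_sq_le hv hf

theorem hybrid_maximal_square_function_bound_general (hν : IsDoublingWith A ν)
    (hv : Orthonormal 𝕜 v) {w : ι → X → ℝ≥0∞} (hw : ∀ i, AEMeasurable (w i) μ)
    (hw_int : ∀ i, ∫⁻ x, w i x ∂μ ≤ 1) {f : X × Y → E}
    (hf : AEStronglyMeasurable f (μ.prod ν)) :
    (∫⁻ p, ∑' i, maximalFunction ν (fun y => ‖coeffLp (v i) fun x => f (x, y)‖ₑ) p.2 ^ 2 *
        w i p.1 ∂μ.prod ν) ^ (1 / 2 : ℝ) ≤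
      ENNReal.ofReal (√8 * A) * eLpNorm f 2 (μ.prod ν) := by
  have hconst : ENNReal.ofReal (√8 * A) ^ 2 = 8 * A ^ 2 := by
    rw [← ofReal_pow (by positivity), mul_pow, Real.sq_sqrt (by norm_num),
      ofReal_mul (by norm_num), ofReal_pow A.coe_nonneg, ofReal_ofNat, ofReal_coe_nnreal]
  rw [one_div, rpow_inv_le_iff two_pos, rpow_two, mul_pow, hconst, eLpNorm_two_sq]
  exact hν.lintegral_tsum_maximalFunction_coeffLp_sq_le hv hw hw_int hf

end HybridBound

section DyadicIntervals

variable {j j' k k' : ℤ} {x : ℝ}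

theorem mem_dyadicI : x ∈ dyadicI j k ↔ ⌊x * (2 : ℝ) ^ j⌋ = k := by
  have h : (0 : ℝ) < 2 ^ j := by positivity
  rw [dyadicI, mem_Ico, Int.floor_eq_iff, _root_.zpow_neg, ← div_eq_mul_inv, ← div_eq_mul_inv,
    div_le_iff₀ h, lt_div_iff₀ h]

theorem floor_mul_two_zpow_of_le (h : j ≤ j') (x : ℝ) :
    ⌊x * (2 : ℝ) ^ j⌋ = ⌊x * (2 : ℝ) ^ j'⌋ / ((2 ^ (j' - j).toNat : ℕ) : ℤ) := by
  have hpow : ((2 ^ (j' - j).toNat : ℕ) : ℝ) = (2 : ℝ) ^ j' / 2 ^ j := by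
    rw [← zpow_sub₀ two_ne_zero, Nat.cast_pow, Nat.cast_ofNat, ← zpow_natCast,
      Int.toNat_of_nonneg (sub_nonneg.2 h)]
  rw [← Int.floor_div_natCast (k := ℝ), hpow]
  congr 1
  field_simp

theorem dyadicI_subset_or_disjoint (h : j ≤ j') (k k' : ℤ) :
    dyadicI j' k' ⊆ dyadicI j k ∨ Disjoint (dyadicI j' k') (dyadicI j k) := by
  by_cases hk : k' / ((2 ^ (j' - j).toNat : ℕ) : ℤ) = k
  · refine Or.inl fun x hx => ?_
    rw [mem_dyadicI] at hx ⊢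
    rw [floor_mul_two_zpow_of_le h, hx, hk]
  · refine Or.inr (Set.disjoint_left.2 fun x hx hx' => hk ?_)
    rw [mem_dyadicI] at hx hx'
    rw [← hx, ← floor_mul_two_zpow_of_le h, hx']

theorem disjoint_dyadicI (j : ℤ) (hk : k ≠ k') : Disjoint (dyadicI j k) (dyadicI j k') :=
  Set.disjoint_left.2 fun _ hx hx' => hk ((mem_dyadicI.1 hx).symm.trans (mem_dyadicI.1 hx'))

theorem dyadicI_eq_union (j k : ℤ) :
    dyadicI j k = dyadicI (j + 1) (2 * k) ∪ dyadicI (j + 1) (2 * k + 1) := by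
  ext x
  have hfloor := floor_mul_two_zpow_of_le (Int.le_add_one le_rfl : j ≤ j + 1) x
  simp only [add_sub_cancel_left, Int.toNat_one, pow_one, Nat.cast_ofNat] at hfloor
  simp only [mem_union, mem_dyadicI, hfloor]
  lia

theorem measurableSet_dyadicI (j k : ℤ) : MeasurableSet (dyadicI j k) := measurableSet_Ico

theorem volume_dyadicI (j k : ℤ) : volume (dyadicI j k) = ENNReal.ofReal ((2 : ℝ) ^ (-j)) := by
  rw [dyadicI, Real.volume_Ico]
  congr 1
  ring

theorem integrable_indicator_dyadicI (j k : ℤ) (c : ℝ) :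
    Integrable ((dyadicI j k).indicator fun _ => c) := by
  rw [integrable_indicator_iff (measurableSet_dyadicI j k)]
  exact integrableOn_const (by simp [volume_dyadicI])

theorem integral_indicator_dyadicI (j k : ℤ) (c : ℝ) :
    ∫ x, (dyadicI j k).indicator (fun _ => c) x = (2 : ℝ) ^ (-j) * c := by
  rw [integral_indicator_const _ (measurableSet_dyadicI j k), Measure.real, volume_dyadicI,
    toReal_ofReal (by positivity), smul_eq_mul]

/-- The `L¹`-normalised indicator `1_I / |I|` of the dyadic interval indexed by `q = (j, k)`. -/
def dyadicWeight (q : ℤ × ℤ) (x : ℝ) : ℝ≥0∞ :=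
  (dyadicI q.1 q.2).indicator (fun _ => (1 : ℝ≥0∞)) x * ENNReal.ofReal ((2 : ℝ) ^ q.1)

theorem measurable_dyadicWeight (q : ℤ × ℤ) : Measurable (dyadicWeight q) :=
  (measurable_const.indicator (measurableSet_dyadicI _ _)).mul_const _

theorem lintegral_dyadicWeight (q : ℤ × ℤ) : ∫⁻ x, dyadicWeight q x = 1 := by
  simp only [dyadicWeight]
  rw [lintegral_mul_const' _ _ ofReal_ne_top, lintegral_indicator_const (measurableSet_dyadicI _ _),
    one_mul, volume_dyadicI, ← ofReal_mul (by positivity), ← zpow_add₀ two_ne_zero]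
  simp

end DyadicIntervals

section Haar

variable {j j' k : ℤ} {x : ℝ}

theorem measurable_haar (j k : ℤ) : Measurable (haar j k) := by
  unfold haar
  exact ((measurable_const.indicator (measurableSet_dyadicI _ _)).sub
    (measurable_const.indicator (measurableSet_dyadicI _ _))).const_mul _

theorem integral_haar (j k : ℤ) : ∫ x, haar j k x = 0 := by
  unfold haar
  rw [integral_const_mul, integral_sub (integrable_indicator_dyadicI _ _ _)
    (integrable_indicator_dyadicI _ _ _), integral_indicator_dyadicI, integral_indicator_dyadicI,
    sub_self, mul_zero]

theorem haar_eq_zero_of_notMem (h : x ∉ dyadicI j k) : haar j k x = 0 := by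
  rw [dyadicI_eq_union, mem_union, not_or] at h
  simp [haar, h]

theorem haar_mul_self (j k : ℤ) (x : ℝ) :
    haar j k x * haar j k x = (dyadicI j k).indicator (fun _ => (2 : ℝ) ^ j) x := by
  have hsqrt : √((2 : ℝ) ^ j) * √((2 : ℝ) ^ j) = 2 ^ j := Real.mul_self_sqrt (by positivity)
  have hhalves : Disjoint (dyadicI (j + 1) (2 * k)) (dyadicI (j + 1) (2 * k + 1)) :=
    disjoint_dyadicI _ (by lia)
  rw [dyadicI_eq_union]
  by_cases hleft : x ∈ dyadicI (j + 1) (2 * k)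
  · simp [haar, hleft, Set.disjoint_left.1 hhalves hleft, hsqrt]
  · by_cases hright : x ∈ dyadicI (j + 1) (2 * k + 1) <;> simp [haar, hleft, hright, hsqrt]

theorem exists_haar_eqOn_dyadicI_const (h : j < j') (k k' : ℤ) :
    ∃ c, EqOn (haar j k) (fun _ => c) (dyadicI j' k') := by
  have hindicator (m : ℤ) : ∃ c : ℝ,
      EqOn ((dyadicI (j + 1) m).indicator fun _ => (1 : ℝ)) (fun _ => c) (dyadicI j' k') := by
    rcases dyadicI_subset_or_disjoint (Int.add_one_le_of_lt h) m k' with hsub | hdisj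
    · exact ⟨1, fun x hx => indicator_of_mem (hsub hx) _⟩
    · exact ⟨0, fun x hx => indicator_of_notMem (Set.disjoint_left.1 hdisj hx) _⟩
  obtain ⟨a, ha⟩ := hindicator (2 * k)
  obtain ⟨b, hb⟩ := hindicator (2 * k + 1)
  exact ⟨√((2 : ℝ) ^ j) * (a - b), fun x hx => by simp only [haar, ha hx, hb hx]⟩

theorem integral_haar_mul_haar_of_lt (h : j < j') (k k' : ℤ) :
    ∫ x, haar j k x * haar j' k' x = 0 := by
  obtain ⟨c, hc⟩ := exists_haar_eqOn_dyadicI_const h k k'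
  have hmul (x : ℝ) : haar j k x * haar j' k' x = c * haar j' k' x := by
    by_cases hx : x ∈ dyadicI j' k'
    · rw [hc hx]
    · rw [haar_eq_zero_of_notMem hx, mul_zero, mul_zero]
  simp_rw [hmul, integral_const_mul, integral_haar, mul_zero]

theorem haar_mul_haar_of_ne {k' : ℤ} (j : ℤ) (hk : k ≠ k') (x : ℝ) :
    haar j k x * haar j k' x = 0 := by
  by_cases hx : x ∈ dyadicI j k
  · rw [haar_eq_zero_of_notMem (Set.disjoint_left.1 (disjoint_dyadicI j hk) hx), mul_zero]
  · rw [haar_eq_zero_of_notMem hx, zero_mul]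

theorem integral_haar_mul_haar (q q' : ℤ × ℤ) :
    ∫ x, haar q.1 q.2 x * haar q'.1 q'.2 x = if q = q' then 1 else 0 := by
  obtain ⟨j, k⟩ := q
  obtain ⟨j', k'⟩ := q'
  rcases lt_trichotomy j j' with h | rfl | h
  · simp [integral_haar_mul_haar_of_lt h, h.ne]
  · rcases eq_or_ne k k' with rfl | hk
    · simp [haar_mul_self, integral_indicator_dyadicI, zpow_ne_zero]
    · simp [haar_mul_haar_of_ne j hk, hk]
  · simp [mul_comm (haar j k _), integral_haar_mul_haar_of_lt h, h.ne']

theorem memLp_haar (q : ℤ × ℤ) : MemLp (fun x => (haar q.1 q.2 x : ℂ)) 2 := by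
  refine MemLp.ofReal ((memLp_two_iff_integrable_sq
    (measurable_haar q.1 q.2).aestronglyMeasurable).2 ?_)
  simp_rw [sq, haar_mul_self]
  exact integrable_indicator_dyadicI _ _ _

/-- The Haar function of the dyadic interval indexed by `q = (j, k)` as an element of
`L²(ℝ; ℂ)`. -/
def haarLp (q : ℤ × ℤ) : Lp ℂ 2 (volume : Measure ℝ) := (memLp_haar q).toLp _

theorem coeFn_haarLp (q : ℤ × ℤ) : haarLp q =ᵐ[volume] fun x => (haar q.1 q.2 x : ℂ) :=
  (memLp_haar q).coeFn_toLp

theorem orthonormal_haarLp : Orthonormal ℂ haarLp := by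
  classical
  refine orthonormal_iff_ite.2 fun q q' => ?_
  have hinner : inner ℂ (haarLp q) (haarLp q') =
      ∫ x, ((haar q.1 q.2 x * haar q'.1 q'.2 x : ℝ) : ℂ) := by
    rw [L2.inner_def]
    refine integral_congr_ae ?_
    filter_upwards [coeFn_haarLp q, coeFn_haarLp q'] with x hx hx'
    simp [hx, hx', mul_comm]
  rw [hinner, integral_complex_ofReal, integral_haar_mul_haar]
  split_ifs <;> simp

theorem coeffLp_haarLp (q : ℤ × ℤ) (g : ℝ → ℂ) :
    coeffLp (haarLp q) g = ∫ t, g t * (haar q.1 q.2 t : ℂ) := by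
  refine integral_congr_ae ?_
  filter_upwards [coeFn_haarLp q] with t ht
  rw [ht, Complex.conj_ofReal, smul_eq_mul, mul_comm]

end Haar

section PartialHaarCoefficients

theorem ae_memLp_two_section {X Y E : Type*} [MeasurableSpace X] [MeasurableSpace Y]
    [NormedAddCommGroup E] {μ : Measure X} {ν : Measure Y} [SFinite μ] [SFinite ν]
    {f : X × Y → E} (hf : MemLp f 2 (μ.prod ν)) :
    ∀ᵐ y ∂ν, MemLp (fun x => f (x, y)) 2 μ := by
  have hsq := (memLp_two_iff_integrable_sq_norm hf.1).1 hf
  filter_upwards [hf.1.prod_swap.prodMk_left, hsq.prod_left_ae] with y hy hsqy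
  exact (memLp_two_iff_integrable_sq_norm hy).2 hsqy

theorem coeffLp_apply {X 𝕜 ι : Type*} [MeasurableSpace X] {μ : Measure X} [RCLike 𝕜] [Fintype ι]
    (φ : Lp 𝕜 2 μ) {f : X → EuclideanSpace 𝕜 ι} (hf : MemLp f 2 μ) (i : ι) :
    coeffLp φ f i = coeffLp φ fun x => f x i :=
  ((EuclideanSpace.proj i : EuclideanSpace 𝕜 ι →L[𝕜] 𝕜).integral_comp_comm
    (integrable_conj_smul φ hf)).symm

theorem M1D_eq_maximalFunction (u : ℝ → ℝ) : M1D u = maximalFunction volume fun y => ‖u y‖ₑ := by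
  ext y
  have hav (s : Set ℝ) : (volume s)⁻¹ * ∫⁻ t in s, ENNReal.ofReal |u t| =
      ⨍⁻ t in s, ‖u t‖ₑ ∂volume := by
    simp only [setLAverage_eq, Real.enorm_eq_ofReal_abs, div_eq_mul_inv, mul_comm]
  simp only [M1D, maximalFunction, hav]
  refine le_antisymm (iSup_le fun a => iSup₂_le fun b hy => ?_)
    (iSup_le fun x => iSup₂_le fun r hy => ?_)
  · rw [Real.Ioo_eq_ball] at hy ⊢
    exact le_iSup_of_le _ (le_iSup₂_of_le _ hy le_rfl)
  · rw [Real.ball_eq_Ioo] at hy ⊢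
    exact le_iSup_of_le _ (le_iSup₂_of_le _ hy le_rfl)

variable {d : ℕ}

theorem sqrt_sum_norm_integral_mul_haar_sq (q : ℤ × ℤ) {g : ℝ → Fin d → ℂ}
    (hg : MemLp (fun t => WithLp.toLp 2 (g t)) 2) :
    √(∑ i, ‖∫ t, g t i * (haar q.1 q.2 t : ℂ)‖ ^ 2) =
      ‖coeffLp (haarLp q) fun t => WithLp.toLp 2 (g t)‖ := by
  simp only [EuclideanSpace.norm_eq, coeffLp_apply _ hg, coeffLp_haarLp]

theorem M1D_haar_eq_maximalFunction_coeffLp (q : ℤ × ℤ) {f : ℝ × ℝ → Fin d → ℂ}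
    (hf : MemLp (fun p => WithLp.toLp 2 (f p)) 2) :
    M1D (fun y => √(∑ i, ‖∫ t, f (t, y) i * (haar q.1 q.2 t : ℂ)‖ ^ 2)) =
      maximalFunction volume fun y =>
        ‖coeffLp (haarLp q) fun x => WithLp.toLp 2 (f (x, y))‖ₑ := by
  rw [M1D_eq_maximalFunction]
  refine maximalFunction_congr_ae ?_
  filter_upwards [ae_memLp_two_section hf] with y hy
  rw [sqrt_sum_norm_integral_mul_haar_sq q hy, enorm_norm]

theorem memLp_toLp_of_L2V_lt_top {f : ℝ × ℝ → Fin d → ℂ} (hf : Measurable f)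
    (h : L2V d f < ⊤) : MemLp (fun p => WithLp.toLp 2 (f p)) 2 :=
  ⟨((PiLp.continuous_toLp 2 _).measurable.comp hf).aestronglyMeasurable, h⟩

end PartialHaarCoefficients

/-- **`L²` boundedness of the hybrid maximal–square operator**
`S̃f(x,y) = (Σ_I (M₂‖⟨f,h_I⟩₁‖_{ℂ^d})(y)² 1_I(x)/|I|)^{1/2}`:
`‖S̃f‖_{L²(ℝ²)} ≤ C ‖f‖_{L²(ℝ²;ℂ^d)}` for an absolute constant `C`. -/
theorem hybrid_maximal_square_function_bound :
    ∃ C : ℝ, 0 < C ∧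
      ∀ (d : ℕ) (f : ℝ × ℝ → Fin d → ℂ), Measurable f → L2V d f < ⊤ →
        (∫⁻ p : ℝ × ℝ,
            ∑' q : ℤ × ℤ,
              (M1D (fun y => Real.sqrt
                    (∑ i, ‖∫ t : ℝ, f (t, y) i * (haar q.1 q.2 t : ℂ)‖ ^ 2)) p.2) ^ 2 *
                (dyadicI q.1 q.2).indicator (fun _ => (1 : ℝ≥0∞)) p.1 *
                ENNReal.ofReal ((2 : ℝ) ^ q.1)) ^ ((1 : ℝ) / 2) ≤
          ENNReal.ofReal C * L2V d f := by
  refine ⟨√8 * (2 : NNReal), by positivity, fun d f hf hfin => ?_⟩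
  have hF := memLp_toLp_of_L2V_lt_top hf hfin
  have hvol : IsDoublingWith 2 (volume : Measure ℝ) := by
    simpa using isDoublingWith_addHaar (volume : Measure ℝ)
  have hbound := hybrid_maximal_square_function_bound_general hvol orthonormal_haarLp
    (fun q => (measurable_dyadicWeight q).aemeasurable)
    (fun q => (lintegral_dyadicWeight q).le) hF.aestronglyMeasurable
  simp only [M1D_haar_eq_maximalFunction_coeffLp _ hF, mul_assoc]
  exact hbound
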